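/- Let N ≥ 2 and for each 1 ≤ l ≤ N let T_l be the bilateral forward operator weighted shift on ℓ²(ℤ,K) with weight sequence (A_n^{(l)})_{n∈ℤ}, where each (A_n^{(l)})_{n∈ℤ} is a uniformly bounded sequence of positive invertible diagonal operators on K. Then for any integers 1 ≤ r₁ < r₂ < ⋯ < r_N the following are equivalent: (1) T₁^{r₁}, T₂^{r₂}, …, T_N^{r_N} are densely d-supercyclic; (2) there exists a strictly increasing sequence (n_k)_{k≥1} of positive integers such that: for every i₁, i₂ ∈ ℕ, j₁, j₂ ∈ ℤ and 1 ≤ l, s ≤ N, ‖(∏_{v=j₁−r_l n_k}^{j₁−1} (A_v^{(l)})^{−1}) f_{i₁}‖ · ‖(∏_{v=j₂}^{j₂+r_s n_k−1} A_v^{(s)}) f_{i₂}‖ → 0 as k → ∞; and for every i ∈ ℕ, j ∈ ℤ and 1 ≤ s < l ≤ N, ‖(∏_{v=j−r_s n_k}^{j−1} (A_v^{(s)})^{−1})(∏_{v=j−r_s n_k}^{j+(r_l−r_s)n_k−1} A_v^{(l)}) f_i‖ → 0 and ‖(∏_{v=j−r_l n_k}^{j−1} (A_v^{(l)})^{−1})(∏_{v=j−r_l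 n_k}^{j−(r_l−r_s)n_k−1} A_v^{(s)}) f_i‖ → 0 as k → ∞. -/

import Mathlib

open Filter Topology

/-!
Sufficiency is a d-supercyclicity criterion: if `S_l ^ n_k` has approximate right inverses `R_{l,k}`
which the other `S_s ^ n_k` send to zero and `‖S_l ^ n_k y‖ ‖R_{s,k} u‖ → 0`, then for suitable
scalars `t_k` the vectors `y + t_k⁻¹ ∑ R_{l,k} u_l` tend to `y` while `t_k S_l ^ n_k` sends them
towards `u_l`, and Baire's theorem applies.

For necessity, take finite sets `F_k` of basis indices exhausting everything and use density to find
`x_k` and `z_k T_l ^ (r_l n_k) x_k` both close to `∑ p ∈ F_k, e p`, with `n_k` so large that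
translating by a nonzero multiple of `n_k` moves `F_k` off itself. Each weight product in the
theorem is then a quotient of coordinates of these vectors, each of which tends to `0` or to `1`.
-/

section Transitivity

theorem dense_setOf_dense_range_of_dense_graph {P X Y : Type*} [TopologicalSpace X] [BaireSpace X]
    [TopologicalSpace Y] [SecondCountableTopology Y] {g : P → X → Y} (hg : ∀ p, Continuous (g p))
    (hdense : Dense (Set.range fun q : X × P => (q.1, g q.2 q.1))) :
    Dense {x | Dense (Set.range fun p => g p x)} := by
  have hbasis := TopologicalSpace.isBasis_countableBasis Y
  have hset : {x | Dense (Set.range fun p => g p x)} =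
      ⋂ V ∈ TopologicalSpace.countableBasis Y, ⋃ p, g p ⁻¹' V := by
    ext x
    simp only [Set.mem_ofPred_eq, Set.mem_iInter, Set.mem_iUnion, hbasis.dense_iff]
    constructor
    · intro h V hV
      obtain ⟨_, hpV, p, rfl⟩ := h V hV (TopologicalSpace.nonempty_of_mem_countableBasis hV)
      exact ⟨p, hpV⟩
    · intro h V hV _
      obtain ⟨p, hpV⟩ := h V hV
      exact ⟨_, hpV, p, rfl⟩
  rw [hset]
  refine dense_biInter_of_isOpen
    (fun V hV => isOpen_iUnion fun p => (hbasis.isOpen hV).preimage (hg p))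
    (TopologicalSpace.countable_countableBasis Y) fun V hV => ?_
  rw [dense_iff_inter_open]
  intro U hU hUne
  obtain ⟨_, ⟨hxU, hxV⟩, ⟨x, p⟩, rfl⟩ := hdense.inter_open_nonempty (U ×ˢ V)
    (hU.prod (hbasis.isOpen hV)) (hUne.prod (TopologicalSpace.nonempty_of_mem_countableBasis hV))
  exact ⟨x, hxU, Set.mem_iUnion.2 ⟨p, hxV⟩⟩

variable {𝕜 E : Type*} [NontriviallyNormedField 𝕜] [AddCommGroup E] [Module 𝕜 E]
  [TopologicalSpace E] [IsTopologicalAddGroup E] [ContinuousSMul 𝕜 E]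

theorem dense_compl_span_singleton (hE : 1 < Module.rank 𝕜 E) (v : E) :
    Dense ((Submodule.span 𝕜 {v} : Set E)ᶜ) := by
  rw [← interior_eq_empty_iff_dense_compl]
  by_contra hne
  have htop : Submodule.span 𝕜 {v} = ⊤ :=
    Submodule.eq_top_of_nonempty_interior' _ (Set.nonempty_iff_ne_empty.2 hne)
  have hspan : Module.rank 𝕜 (Submodule.span 𝕜 {v}) ≤ 1 := by
    simpa using rank_span_le (R := 𝕜) ({v} : Set E)
  rw [htop, rank_top] at hspan
  exact hspan.not_gt hE

theorem frequently_exists_smul_mem_of_dense_range [CompleteSpace 𝕜] [T2Space E]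
    (hE : 1 < Module.rank 𝕜 E) {w : ℕ → E}
    (hw : Dense (Set.range fun p : 𝕜 × ℕ => p.1 • w p.2)) {V : Set E} (hV : IsOpen V)
    (hVne : V.Nonempty) : ∃ᶠ n in atTop, ∃ z : 𝕜, z • w n ∈ V := by
  rw [frequently_atTop]
  intro m
  induction m generalizing V with
  | zero =>
    obtain ⟨_, hmem, p, rfl⟩ := hw.inter_open_nonempty V hV hVne
    exact ⟨p.2, Nat.zero_le _, p.1, hmem⟩
  | succ m ih =>
    have hopen : IsOpen ((Submodule.span 𝕜 {w m} : Set E)ᶜ) :=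
      (Submodule.closed_of_finiteDimensional _).isOpen_compl
    obtain ⟨n, hmn, z, hzV, hz⟩ := ih (hV.inter hopen)
      ((dense_compl_span_singleton hE (w m)).inter_open_nonempty V hV hVne)
    refine ⟨n, hmn.lt_of_ne ?_, z, hzV⟩
    rintro rfl
    exact hz (Submodule.smul_mem _ z (Submodule.mem_span_singleton_self _))

end Transitivity

section DSupercyclic

variable {𝕜 X κ : Type*}

/-- Dense d-supercyclicity of a family `S` of operators: the vectors whose joint projective orbit
under `S` is dense in the product space form a dense set. -/
def DenselyDSupercyclic [NormedField 𝕜] [NormedAddCommGroup X] [NormedSpace 𝕜 X]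
    (S : κ → X →L[𝕜] X) : Prop :=
  Dense {x : X | Dense (Set.range fun p : 𝕜 × ℕ => fun l => p.1 • (S l ^ p.2) x)}

theorem DenselyDSupercyclic.frequently_exists [NontriviallyNormedField 𝕜] [CompleteSpace 𝕜]
    [NormedAddCommGroup X] [NormedSpace 𝕜 X] {S : κ → X →L[𝕜] X} (hS : DenselyDSupercyclic S)
    (hrank : 1 < Module.rank 𝕜 (κ → X)) {U : Set X} (hU : IsOpen U) (hUne : U.Nonempty)
    {V : Set (κ → X)} (hV : IsOpen V) (hVne : V.Nonempty) :
    ∃ᶠ n in atTop, ∃ x ∈ U, ∃ z : 𝕜, (fun l => z • (S l ^ n) x) ∈ V := by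
  obtain ⟨x, hxU, hx⟩ := hS.inter_open_nonempty U hU hUne
  exact (frequently_exists_smul_mem_of_dense_range hrank
    (w := fun n l => (S l ^ n) x) hx hV hVne).mono fun n hn => ⟨x, hxU, hn⟩

theorem DenselyDSupercyclic.exists_seq [Finite κ] [NontriviallyNormedField 𝕜] [CompleteSpace 𝕜]
    [NormedAddCommGroup X] [NormedSpace 𝕜 X] {S : κ → X →L[𝕜] X} (hS : DenselyDSupercyclic S)
    (hrank : 1 < Module.rank 𝕜 (κ → X)) (y : ℕ → X) {P : ℕ → ℕ → Prop}
    (hP : ∀ k, ∀ᶠ n in atTop, P k n) :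
    ∃ (n : ℕ → ℕ) (x : ℕ → X) (z : ℕ → 𝕜), StrictMono n ∧ (∀ k, P k (n k)) ∧
      Tendsto (fun k => x k - y k) atTop (𝓝 0) ∧
      ∀ l, Tendsto (fun k => z k • (S l ^ n k) (x k) - y k) atTop (𝓝 0) := by
  let δ : ℕ → ℝ := fun k => 1 / ((k : ℝ) + 1)
  have hδ0 : ∀ k, 0 < δ k := fun k => Nat.one_div_pos_of_nat
  have hδ : Tendsto δ atTop (𝓝 0) := tendsto_one_div_add_atTop_nhds_zero_nat
  have hfreq : ∀ k, ∃ᶠ n in atTop, (∃ x ∈ Metric.ball (y k) (δ k), ∃ z : 𝕜,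
      (fun l => z • (S l ^ n) x) ∈ Set.univ.pi fun _ : κ => Metric.ball (y k) (δ k)) ∧ P k n :=
    fun k => (hS.frequently_exists hrank Metric.isOpen_ball ⟨y k, Metric.mem_ball_self (hδ0 k)⟩
      (isOpen_set_pi Set.finite_univ fun _ _ => Metric.isOpen_ball)
      ⟨fun _ => y k, fun _ _ => Metric.mem_ball_self (hδ0 k)⟩).and_eventually (hP k)
  obtain ⟨n, hn, hseq⟩ := extraction_forall_of_frequently hfreq
  choose x hx z hz using fun k => (hseq k).1
  exact ⟨n, x, z, hn, fun k => (hseq k).2,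
    squeeze_zero_norm (fun k => (mem_ball_iff_norm.1 (hx k)).le) hδ,
    fun l => squeeze_zero_norm (fun k => (mem_ball_iff_norm.1 (hz k l trivial)).le) hδ⟩

end DSupercyclic

section Criterion

theorem exists_balancing_seq {α β : ℕ → ℝ} (hα : ∀ k, 0 ≤ α k) (hβ : ∀ k, 0 ≤ β k)
    (hαβ : Tendsto (fun k => α k * β k) atTop (𝓝 0)) :
    ∃ t : ℕ → ℝ, (∀ k, 0 < t k) ∧ Tendsto (fun k => t k * α k) atTop (𝓝 0) ∧
      Tendsto (fun k => (t k)⁻¹ * β k) atTop (𝓝 0) := by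
  let ε : ℕ → ℝ := fun k => √(α k * β k) + 1 / ((k : ℝ) + 1)
  have hε : Tendsto ε atTop (𝓝 0) := by
    simpa [ε] using hαβ.sqrt.add (tendsto_one_div_add_atTop_nhds_zero_nat (𝕜 := ℝ))
  have hε0 : ∀ k, 0 < ε k := fun k => by positivity
  have hαβε : ∀ k, α k * β k ≤ ε k ^ 2 := fun k =>
    (Real.sqrt_le_left (hε0 k).le).1 (le_add_of_nonneg_right (by positivity))
  let t : ℕ → ℝ := fun k => (β k + ε k ^ 2) / (ε k * (1 + α k))
  have ht : ∀ k, 0 < t k := fun k => by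
    have := hα k; have := hβ k; have := hε0 k; positivity
  refine ⟨t, ht, squeeze_zero (fun k => mul_nonneg (ht k).le (hα k)) (fun k => ?_) hε,
    squeeze_zero (fun k => mul_nonneg (inv_nonneg.2 (ht k).le) (hβ k)) (fun k => ?_) hε⟩
  · have hden : 0 < ε k * (1 + α k) := mul_pos (hε0 k) (by linarith [hα k])
    rw [div_mul_eq_mul_div, div_le_iff₀ hden]
    linarith [hαβε k]
  · have hnum : 0 < β k + ε k ^ 2 := add_pos_of_nonneg_of_pos (hβ k) (pow_pos (hε0 k) 2)
    rw [inv_div, div_mul_eq_mul_div, div_le_iff₀ hnum]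
    nlinarith [hαβε k, hε0 k]

theorem tendsto_linearCombination {R M J α : Type*} [Semiring R] [AddCommMonoid M] [Module R M]
    [TopologicalSpace M] [ContinuousAdd M] [ContinuousConstSMul R M] {L : Filter α}
    {v : α → J → M} {w : J → M} (hv : ∀ p, Tendsto (fun k => v k p) L (𝓝 (w p))) (c : J →₀ R) :
    Tendsto (fun k => Finsupp.linearCombination R (v k) c) L
      (𝓝 (Finsupp.linearCombination R w c)) := by
  simp only [Finsupp.linearCombination_apply, Finsupp.sum]
  exact tendsto_finsetSum _ fun p _ => (hv p).const_smul (c p)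

variable {𝕜 X κ J : Type*} [RCLike 𝕜] [NormedAddCommGroup X] [NormedSpace 𝕜 X]

theorem exists_tendsto_of_tendsto_norm_mul_norm [Finite κ] {A : κ → ℕ → X →L[𝕜] X} {y : X}
    {u : κ → X} {v : κ → ℕ → X}
    (hyv : ∀ l s, Tendsto (fun k => ‖A l k y‖ * ‖v s k‖) atTop (𝓝 0))
    (hv : ∀ l, Tendsto (fun k => A l k (v l k)) atTop (𝓝 (u l)))
    (hcross : ∀ s l, s ≠ l → Tendsto (fun k => A l k (v s k)) atTop (𝓝 0)) :
    ∃ (x : ℕ → X) (z : ℕ → 𝕜), Tendsto x atTop (𝓝 y) ∧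
      ∀ l, Tendsto (fun k => z k • A l k (x k)) atTop (𝓝 (u l)) := by
  classical
  cases nonempty_fintype κ
  let α : ℕ → ℝ := fun k => ∑ l, ‖A l k y‖
  let β : ℕ → ℝ := fun k => ∑ s, ‖v s k‖
  have hαβ : Tendsto (fun k => α k * β k) atTop (𝓝 0) := by
    simpa only [α, β, Finset.sum_mul_sum, Finset.sum_const_zero] using
      tendsto_finsetSum Finset.univ fun l _ => tendsto_finsetSum Finset.univ fun s _ => hyv l s
  obtain ⟨t, ht, htα, htβ⟩ :=
    exists_balancing_seq (fun k => by positivity) (fun k => by positivity) hαβ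
  have hnorm : ∀ k, ‖(t k : 𝕜)‖ = t k := fun k => RCLike.norm_of_nonneg (ht k).le
  have hAv : ∀ l, Tendsto (fun k => ∑ s, A l k (v s k)) atTop (𝓝 (u l)) := fun l => by
    have hsum := tendsto_finsetSum Finset.univ fun s _ =>
      show Tendsto (fun k => A l k (v s k)) atTop (𝓝 (if s = l then u l else 0)) by
        split_ifs with hsl
        · exact hsl ▸ hv s
        · exact hcross s l hsl
    simpa using hsum
  refine ⟨fun k => y + (t k : 𝕜)⁻¹ • ∑ s, v s k, fun k => t k, ?_, fun l => ?_⟩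
  · have hcorr : Tendsto (fun k => (t k : 𝕜)⁻¹ • ∑ s, v s k) atTop (𝓝 0) := by
      refine squeeze_zero_norm (fun k => ?_) htβ
      rw [norm_smul, norm_inv, hnorm]
      exact mul_le_mul_of_nonneg_left (norm_sum_le _ _) (inv_nonneg.2 (ht k).le)
    simpa using hcorr.const_add y
  · have hAy : Tendsto (fun k => (t k : 𝕜) • A l k y) atTop (𝓝 0) := by
      refine squeeze_zero_norm (fun k => ?_) htα
      rw [norm_smul, hnorm]
      exact mul_le_mul_of_nonneg_left (Finset.single_le_sum (f := fun l => ‖A l k y‖)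
        (fun _ _ => norm_nonneg _) (Finset.mem_univ l)) (ht k).le
    have hsplit : ∀ k, (t k : 𝕜) • A l k (y + (t k : 𝕜)⁻¹ • ∑ s, v s k) =
        (t k : 𝕜) • A l k y + ∑ s, A l k (v s k) := fun k => by
      rw [map_add, map_smul, smul_add, smul_inv_smul₀ (RCLike.ofReal_ne_zero.2 (ht k).ne'), map_sum]
    simpa only [hsplit, zero_add] using hAy.add (hAv l)

theorem tendsto_mul_norm_linearCombination {α : Type*} {L : Filter α} {b : α → ℝ}
    {v : α → J → X} (hbv : ∀ p, Tendsto (fun k => b k * ‖v k p‖) L (𝓝 0)) (c : J →₀ 𝕜) :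
    Tendsto (fun k => b k * ‖Finsupp.linearCombination 𝕜 (v k) c‖) L (𝓝 0) := by
  have hiff : ∀ g : α → X, Tendsto (fun k => b k * ‖g k‖) L (𝓝 0) ↔
      Tendsto (fun k => (b k : 𝕜) • g k) L (𝓝 0) := fun g => by
    rw [tendsto_zero_iff_norm_tendsto_zero, tendsto_zero_iff_norm_tendsto_zero (E := X)]
    simp only [norm_mul, norm_smul, RCLike.norm_ofReal, Real.norm_eq_abs, abs_norm]
  rw [hiff]
  simpa [Finsupp.linearCombination_apply, Finsupp.sum, Finset.smul_sum, smul_comm (b _ : 𝕜)] using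
    tendsto_linearCombination (w := 0) (fun p => (hiff fun k => v k p).1 (hbv p)) c

theorem denselyDSupercyclic_of_tendsto [CompleteSpace X] [Finite κ] [Countable J]
    {S : κ → X →L[𝕜] X} {e : J → X} (he : Dense (Submodule.span 𝕜 (Set.range e) : Set X))
    (n : ℕ → ℕ) (R : κ → ℕ → J → X)
    (hmixed : ∀ l s p q, Tendsto (fun k => ‖(S l ^ n k) (e p)‖ * ‖R s k q‖) atTop (𝓝 0))
    (hright : ∀ l q, Tendsto (fun k => (S l ^ n k) (R l k q)) atTop (𝓝 (e q)))
    (hcross : ∀ s l, s ≠ l → ∀ q, Tendsto (fun k => (S l ^ n k) (R s k q)) atTop (𝓝 0)) :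
    DenselyDSupercyclic S := by
  have : TopologicalSpace.SeparableSpace X := by
    rw [← TopologicalSpace.isSeparable_univ_iff, ← he.closure_eq]
    exact ((Set.countable_range e).isSeparable.span (R := 𝕜)).closure
  have : SecondCountableTopology X := UniformSpace.secondCountable_of_separable X
  refine dense_setOf_dense_range_of_dense_graph
    (g := fun (p : 𝕜 × ℕ) x l => p.1 • (S l ^ p.2) x) (fun p => by fun_prop) ?_
  refine Dense.of_closure ((he.prod (dense_pi Set.univ fun (_ : κ) _ => he)).mono ?_)
  rintro ⟨y, u⟩ ⟨hy, hu⟩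
  obtain ⟨c, hc : Finsupp.linearCombination 𝕜 e c = y⟩ :=
    Finsupp.mem_span_range_iff_exists_finsupp.1 hy
  choose d hd using fun l => Finsupp.mem_span_range_iff_exists_finsupp.1 (hu l trivial)
  replace hd : ∀ l, Finsupp.linearCombination 𝕜 e (d l) = u l := hd
  have hS : ∀ l k (w : J → X) b, (S l ^ n k) (Finsupp.linearCombination 𝕜 w b) =
      Finsupp.linearCombination 𝕜 (fun q => (S l ^ n k) (w q)) b := fun l k w b =>
    Finsupp.apply_linearCombination 𝕜 (S l ^ n k).toLinearMap w b
  have hmixed' : ∀ l s, Tendsto (fun k =>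
      ‖(S l ^ n k) y‖ * ‖Finsupp.linearCombination 𝕜 (R s k) (d s)‖) atTop (𝓝 0) := fun l s => by
    have hbasis := fun p => tendsto_mul_norm_linearCombination (fun q => hmixed l s p q) (d s)
    simp only [← hc, hS, mul_comm ‖Finsupp.linearCombination 𝕜 _ c‖]
    exact tendsto_mul_norm_linearCombination (fun p => by simpa only [mul_comm] using hbasis p) c
  have hright' : ∀ l, Tendsto (fun k =>
      (S l ^ n k) (Finsupp.linearCombination 𝕜 (R l k) (d l))) atTop (𝓝 (u l)) := fun l => by
    simpa only [hS, hd] using tendsto_linearCombination (hright l) (d l)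
  have hcross' : ∀ s l, s ≠ l → Tendsto (fun k =>
      (S l ^ n k) (Finsupp.linearCombination 𝕜 (R s k) (d s))) atTop (𝓝 0) := fun s l hsl => by
    simpa only [hS, Finsupp.linearCombination_zero, LinearMap.zero_apply] using
      tendsto_linearCombination (w := 0) (hcross s l hsl) (d s)
  obtain ⟨x, z, hx, hz⟩ := exists_tendsto_of_tendsto_norm_mul_norm hmixed' hright' hcross'
  exact mem_closure_of_tendsto (hx.prodMk_nhds (tendsto_pi_nhds.2 hz))
    (Eventually.of_forall fun k => ⟨(x k, z k, n k), rfl⟩)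

end Criterion

section AuerbachSystem

variable {𝕜 X J : Type*} [NontriviallyNormedField 𝕜] [NormedAddCommGroup X]
  [NormedSpace 𝕜 X]

/-- An Auerbach system: a biorthogonal system of unit vectors `e p` and coordinate functionals `c p`
of norm at most one. It stands in for an orthonormal basis when `X` is only a normed space. -/
structure IsAuerbachSystem (e : J → X) (c : J → X →L[𝕜] 𝕜) : Prop where
  norm_eq_one : ∀ p, ‖e p‖ = 1
  norm_coord_le_one : ∀ p, ‖c p‖ ≤ 1
  coord_self : ∀ p, c p (e p) = 1
  coord_of_ne : ∀ p q, p ≠ q → c p (e q) = 0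

namespace IsAuerbachSystem

theorem of_orthonormal {𝕜 K : Type*} [RCLike 𝕜] [NormedAddCommGroup K] [InnerProductSpace 𝕜 K]
    {f : J → K} (hf : Orthonormal 𝕜 f) : IsAuerbachSystem f fun i => innerSL 𝕜 (f i) where
  norm_eq_one := hf.1
  norm_coord_le_one i := by rw [innerSL_apply_norm, hf.1]
  coord_self i := by rw [innerSL_apply_apply, inner_self_eq_norm_sq_to_K, hf.1]; simp
  coord_of_ne _ _ h := hf.2 h

variable {e : J → X} {c : J → X →L[𝕜] 𝕜}

theorem lp_single {I : Type*} [DecidableEq I] {q : ENNReal} [Fact (1 ≤ q)]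
    (h : IsAuerbachSystem e c) :
    IsAuerbachSystem (fun p : J × I => (lp.single q p.2 (e p.1) : lp (fun _ : I => X) q))
      fun p => (c p.1).comp (lp.evalCLM 𝕜 (fun _ : I => X) q p.2) where
  norm_eq_one p := by
    rw [lp.norm_single (zero_lt_one.trans_le Fact.out), h.norm_eq_one]
  norm_coord_le_one p := by
    refine (ContinuousLinearMap.opNorm_comp_le _ _).trans
      (mul_le_one₀ (h.norm_coord_le_one _) (norm_nonneg _) ?_)
    exact LinearMap.mkContinuous_norm_le _ zero_le_one _
  coord_self p := by
    change c p.1 ((lp.single q p.2 (e p.1) : lp (fun _ : I => X) q) p.2) = 1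
    rw [lp.single_apply_self, h.coord_self]
  coord_of_ne p r hpr := by
    change c p.1 ((lp.single q r.2 (e r.1) : lp (fun _ : I => X) q) p.2) = 0
    by_cases hI : p.2 = r.2
    · rw [hI, lp.single_apply_self, h.coord_of_ne _ _ fun hJ => hpr (Prod.ext hJ hI)]
    · rw [lp.single_apply_ne _ _ _ hI, map_zero]

theorem linearIndependent (h : IsAuerbachSystem e c) : LinearIndependent 𝕜 e :=
  LinearIndependent.of_pairwise_dual_eq_zero_one e (fun p => (c p).toLinearMap)
    (fun p q hpq => h.coord_of_ne p q hpq) h.coord_self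

theorem one_lt_rank_pi {κ : Type*} [Infinite J] [Nonempty κ] (h : IsAuerbachSystem e c) :
    1 < Module.rank 𝕜 (κ → X) := by
  inhabit κ
  have hdiag : LinearIndependent 𝕜 fun p (_ : κ) => e p :=
    LinearIndependent.of_comp (LinearMap.proj default) h.linearIndependent
  exact Cardinal.one_lt_aleph0.trans_le hdiag.aleph0_le_rank

theorem norm_coord_apply_le (h : IsAuerbachSystem e c) (p : J) (x : X) : ‖c p x‖ ≤ ‖x‖ :=
  ContinuousLinearMap.le_of_opNorm_le_of_le _ (h.norm_coord_le_one p) le_rfl |>.trans_eq (one_mul _)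

theorem coord_sum_of_mem (h : IsAuerbachSystem e c) {F : Finset J} {p : J} (hp : p ∈ F) :
    c p (∑ q ∈ F, e q) = 1 := by
  rw [map_sum, Finset.sum_eq_single_of_mem p hp fun q _ hqp => h.coord_of_ne p q hqp.symm,
    h.coord_self]

theorem coord_sum_of_notMem (h : IsAuerbachSystem e c) {F : Finset J} {p : J} (hp : p ∉ F) :
    c p (∑ q ∈ F, e q) = 0 := by
  rw [map_sum]
  exact Finset.sum_eq_zero fun q hq => h.coord_of_ne p q (ne_of_mem_of_not_mem hq hp).symm

variable {α : Type*} {L : Filter α} {F : α → Finset J} {x : α → X}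

theorem tendsto_coord_sub (h : IsAuerbachSystem e c)
    (hx : Tendsto (fun k => x k - ∑ q ∈ F k, e q) L (𝓝 0)) (p : α → J) :
    Tendsto (fun k => c (p k) (x k) - c (p k) (∑ q ∈ F k, e q)) L (𝓝 0) :=
  squeeze_zero_norm (fun k => (map_sub (c (p k)) _ _) ▸ h.norm_coord_apply_le (p k) _)
    (tendsto_zero_iff_norm_tendsto_zero.1 hx)

theorem tendsto_coord_one (h : IsAuerbachSystem e c)
    (hx : Tendsto (fun k => x k - ∑ q ∈ F k, e q) L (𝓝 0)) {p : α → J}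
    (hp : ∀ᶠ k in L, p k ∈ F k) :
    Tendsto (fun k => c (p k) (x k)) L (𝓝 1) := by
  refine tendsto_sub_nhds_zero_iff.1 ((h.tendsto_coord_sub hx p).congr' ?_)
  filter_upwards [hp] with k hk
  rw [h.coord_sum_of_mem hk]

theorem tendsto_coord_zero (h : IsAuerbachSystem e c)
    (hx : Tendsto (fun k => x k - ∑ q ∈ F k, e q) L (𝓝 0)) {p : α → J}
    (hp : ∀ᶠ k in L, p k ∉ F k) :
    Tendsto (fun k => c (p k) (x k)) L (𝓝 0) := by
  refine (h.tendsto_coord_sub hx p).congr' ?_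
  filter_upwards [hp] with k hk
  rw [h.coord_sum_of_notMem hk, sub_zero]

end IsAuerbachSystem

theorem dense_span_lp_single {I : Type*} [DecidableEq I] {q : ENNReal} [Fact (1 ≤ q)] (hq : q ≠ ⊤)
    {e : J → X} (he : Dense (Submodule.span 𝕜 (Set.range e) : Set X)) :
    Dense (Submodule.span 𝕜 (Set.range fun p : J × I =>
      (lp.single q p.2 (e p.1) : lp (fun _ : I => X) q)) : Set (lp (fun _ : I => X) q)) := by
  set E := Submodule.span 𝕜 (Set.range fun p : J × I =>
    (lp.single q p.2 (e p.1) : lp (fun _ : I => X) q))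
  have hsingle : ∀ (j : I) (u : X), (lp.single q j u : lp (fun _ : I => X) q) ∈
      E.topologicalClosure := fun j u => by
    let L := lp.singleContinuousLinearMap 𝕜 (fun _ : I => X) q j
    have hle : Submodule.span 𝕜 (Set.range e) ≤ E.comap L.toLinearMap :=
      Submodule.span_le.2 <| Set.range_subset_iff.2 fun i => Submodule.subset_span ⟨(i, j), rfl⟩
    exact map_mem_closure L.continuous (he u) hle
  exact fun x => E.isClosed_topologicalClosure.mem_of_tendsto (lp.hasSum_single hq x)
    (Eventually.of_forall fun s => Submodule.sum_mem _ fun j _ => hsingle j _)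

end AuerbachSystem

section Quotients

variable {𝕜 α : Type*} [Field 𝕜] [TopologicalSpace 𝕜] [IsTopologicalDivisionRing 𝕜] [T1Space 𝕜]
  {L : Filter α} {P Q z ξ η : α → 𝕜}

theorem tendsto_inv_mul_zero (hP : Tendsto (fun k => z k * (P k * ξ k)) L (𝓝 1))
    (hQ : Tendsto (fun k => z k * (Q k * ξ k)) L (𝓝 0)) :
    Tendsto (fun k => (P k)⁻¹ * Q k) L (𝓝 0) := by
  have hquot := hQ.div hP one_ne_zero
  rw [zero_div] at hquot
  refine hquot.congr' ?_
  filter_upwards [hP.eventually_ne one_ne_zero] with k hk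
  simp only [ne_eq, mul_eq_zero, not_or] at hk
  obtain ⟨hz, hPk, hξ⟩ := hk
  rw [Pi.div_apply]
  field_simp

theorem tendsto_inv_mul_zero_of_tendsto_one (hP : Tendsto (fun k => z k * (P k * ξ k)) L (𝓝 1))
    (hξ : Tendsto ξ L (𝓝 0)) (hQ : Tendsto (fun k => z k * (Q k * η k)) L (𝓝 0))
    (hη : Tendsto η L (𝓝 1)) :
    Tendsto (fun k => (P k)⁻¹ * Q k) L (𝓝 0) := by
  have hquot := (hQ.mul hξ).div (hP.mul hη) (by simp)
  simp only [mul_zero, zero_div] at hquot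
  refine hquot.congr' ?_
  filter_upwards [hP.eventually_ne one_ne_zero, hη.eventually_ne one_ne_zero] with k hk hηk
  simp only [ne_eq, mul_eq_zero, not_or] at hk
  obtain ⟨hz, hPk, hξk⟩ := hk
  rw [Pi.div_apply]
  field_simp

end Quotients

section WeightedShift

variable {𝕜 X ι κ : Type*}

/-- The product `w i j * w i (j + 1) * ⋯ * w i (j + m - 1)` of `m` consecutive weights, by which the
`m`-th power of a weighted shift stretches the basis vector with index `(i, j)`. -/
noncomputable def weightProd (w : ι → ℤ → ℝ) (i : ι) (j : ℤ) (m : ℕ) : ℝ :=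
  ∏ v ∈ Finset.Ico j (j + m), w i v

theorem weightProd_zero (w : ι → ℤ → ℝ) (i : ι) (j : ℤ) : weightProd w i j 0 = 1 := by
  simp [weightProd]

theorem weightProd_succ (w : ι → ℤ → ℝ) (i : ι) (j : ℤ) (m : ℕ) :
    weightProd w i j (m + 1) = weightProd w i j m * w i (j + m) := by
  have hIco : Finset.Ico j (j + (m + 1 : ℕ)) = insert (j + m : ℤ) (Finset.Ico j (j + m)) := by
    ext v
    simp only [Finset.mem_Ico, Finset.mem_insert]
    omega
  rw [weightProd, hIco, Finset.prod_insert (by simp), mul_comm, weightProd]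

theorem weightProd_pos {w : ι → ℤ → ℝ} (hw : ∀ i j, 0 < w i j) (i : ι) (j : ℤ) (m : ℕ) :
    0 < weightProd w i j m :=
  Finset.prod_pos fun _ _ => hw _ _

/-- The condition on the weights `w l` along the sequence `n` that characterizes d-supercyclicity of
the powers `T l ^ r l` of weighted shifts. Products of inverse weights are written as inverses of
products, and both families of cross terms are covered by letting `s` and `l` be any two distinct
indices. -/
structure DSupercyclicWeights (w : κ → ι → ℤ → ℝ) (r : κ → ℕ) (n : ℕ → ℕ) : Prop where
  mixed : ∀ i₁ i₂ j₁ j₂ l s, Tendsto (fun k =>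
    (weightProd (w l) i₁ (j₁ - (r l * n k : ℕ)) (r l * n k))⁻¹ *
      weightProd (w s) i₂ j₂ (r s * n k)) atTop (𝓝 0)
  cross : ∀ i j s l, s ≠ l → Tendsto (fun k =>
    (weightProd (w s) i (j - (r s * n k : ℕ)) (r s * n k))⁻¹ *
      weightProd (w l) i (j - (r s * n k : ℕ)) (r l * n k)) atTop (𝓝 0)

theorem dSupercyclicWeights_iff_norm_prod_smul [LinearOrder κ] [NormedAddCommGroup X]
    [NormedSpace ℝ X] {f : ι → X} (hf : ∀ i, ‖f i‖ = 1) {r : κ → ℕ} (hr : StrictMono r)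
    {a : κ → ι → ℤ → ℝ} (ha : ∀ l i j, 0 < a l i j) {n : ℕ → ℕ} :
    DSupercyclicWeights a r n ↔
      (∀ i₁ i₂ : ι, ∀ j₁ j₂ : ℤ, ∀ l s : κ,
        Tendsto (fun k =>
            ‖(∏ v ∈ Finset.Ico (j₁ - (r l * n k : ℕ)) j₁, (a l i₁ v)⁻¹) • f i₁‖ *
            ‖(∏ v ∈ Finset.Ico j₂ (j₂ + (r s * n k : ℕ)), a s i₂ v) • f i₂‖)
          atTop (𝓝 0)) ∧
      (∀ i : ι, ∀ j : ℤ, ∀ s l : κ, s < l →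
        Tendsto (fun k =>
            ‖((∏ v ∈ Finset.Ico (j - (r s * n k : ℕ)) j, (a s i v)⁻¹) *
              ∏ v ∈ Finset.Ico (j - (r s * n k : ℕ)) (j + ((r l - r s) * n k : ℕ)), a l i v) •
              f i‖) atTop (𝓝 0) ∧
        Tendsto (fun k =>
            ‖((∏ v ∈ Finset.Ico (j - (r l * n k : ℕ)) j, (a l i v)⁻¹) *
              ∏ v ∈ Finset.Ico (j - (r l * n k : ℕ)) (j - ((r l - r s) * n k : ℕ)), a s i v) •
              f i‖) atTop (𝓝 0)) := by
  have hinv : ∀ l i (j : ℤ) (m : ℕ), ∏ v ∈ Finset.Ico (j - m) j, (a l i v)⁻¹ =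
      (weightProd (a l) i (j - m) m)⁻¹ := fun l i j m => by
    rw [weightProd, sub_add_cancel, Finset.prod_inv_distrib]
  have hprod : ∀ l i (j : ℤ) (m : ℕ), ∏ v ∈ Finset.Ico j (j + m), a l i v =
      weightProd (a l) i j m := fun _ _ _ _ => rfl
  have hnorm : ∀ l i j m, ‖weightProd (a l) i j m‖ = weightProd (a l) i j m := fun l i j m =>
    Real.norm_of_nonneg (weightProd_pos (ha l) i j m).le
  have hadd : ∀ (j : ℤ) (s l : κ) (m : ℕ), s < l →
      j + ((r l - r s) * m : ℕ) = j - (r s * m : ℕ) + (r l * m : ℕ) := fun j s l m h => by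
    push_cast [Nat.cast_sub (hr h).le]; ring
  have hsub : ∀ (j : ℤ) (s l : κ) (m : ℕ), s < l →
      j - ((r l - r s) * m : ℕ) = j - (r l * m : ℕ) + (r s * m : ℕ) := fun j s l m h => by
    push_cast [Nat.cast_sub (hr h).le]; ring
  simp +contextual only [hadd, hsub, hinv, hprod, norm_smul, norm_mul, norm_inv, hnorm, hf, mul_one]
  refine ⟨fun h => ⟨h.mixed, fun i j s l hsl => ⟨h.cross i j s l hsl.ne, h.cross i j l s hsl.ne'⟩⟩,
    fun h => ⟨h.1, fun i j s l hsl => ?_⟩⟩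
  rcases hsl.lt_or_gt with hlt | hgt
  · exact (h.2 i j s l hlt).1
  · exact (h.2 i j l s hgt).2

theorem eventually_notMem_translate (F : Finset (ι × ℤ)) :
    ∀ᶠ n : ℕ in atTop, ∀ d : ℤ, d ≠ 0 → ∀ i j, (i, j) ∈ F → (i, j + d * n) ∉ F := by
  obtain ⟨M, hM⟩ := (F.image fun p => |p.2|).bddAbove
  have hbound : ∀ i j, (i, j) ∈ F → |j| ≤ M := fun i j hij =>
    hM (Finset.mem_coe.2 (Finset.mem_image_of_mem (fun p : ι × ℤ => |p.2|) hij))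
  filter_upwards [eventually_gt_atTop (2 * M).toNat] with n hn d hd i j hij hij'
  have hdn : (n : ℤ) ≤ |d * n| := by
    rw [abs_mul, Nat.abs_cast]
    exact le_mul_of_one_le_left (Nat.cast_nonneg n) (Int.one_le_abs hd)
  have htri : |d * n| ≤ |j + d * n| + |j| := by
    simpa only [add_sub_cancel_left] using abs_sub (j + d * n) j
  have := hbound i j hij
  have := hbound i _ hij'
  omega

variable [RCLike 𝕜] [NormedAddCommGroup X] [NormedSpace 𝕜 X]

/-- `T` is a bilateral forward weighted shift along the vectors `e (i, j)`: for every `i` it moves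
the `j`-th vector to the `(j + 1)`-st one, with weight `w i j`. -/
def IsWeightedShift (e : ι × ℤ → X) (w : ι → ℤ → ℝ) (T : X →L[𝕜] X) : Prop :=
  ∀ i j, T (e (i, j)) = (w i j : 𝕜) • e (i, j + 1)

namespace IsWeightedShift

variable {e : ι × ℤ → X} {c : ι × ℤ → X →L[𝕜] 𝕜} {w : ι → ℤ → ℝ} {T : X →L[𝕜] X}

theorem pow_apply (hT : IsWeightedShift e w T) (i : ι) (j : ℤ) (m : ℕ) :
    (T ^ m) (e (i, j)) = (weightProd w i j m : 𝕜) • e (i, j + m) := by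
  induction m with
  | zero => simp [weightProd_zero]
  | succ m ih =>
    rw [pow_succ', mul_apply_eq_comp, ih, map_smul, hT, smul_smul, weightProd_succ]
    push_cast
    rw [add_assoc]

theorem coord_pow_apply (hT : IsWeightedShift e w T) (hec : IsAuerbachSystem e c)
    (he : Dense (Submodule.span 𝕜 (Set.range e) : Set X)) (i : ι) (j : ℤ) (m : ℕ) (x : X) :
    c (i, j + m) ((T ^ m) x) = (weightProd w i j m : 𝕜) * c (i, j) x := by
  have hcomp : (c (i, j + m)).comp (T ^ m) = (weightProd w i j m : 𝕜) • c (i, j) := by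
    refine ContinuousLinearMap.ext_on he ?_
    rintro _ ⟨⟨i', j'⟩, rfl⟩
    simp only [ContinuousLinearMap.comp_apply, hT.pow_apply, map_smul, smul_apply, smul_eq_mul]
    by_cases hij : (i, j) = (i', j')
    · obtain ⟨rfl, rfl⟩ := Prod.mk.inj hij
      simp only [hec.coord_self]
    · have hij' : (i, j + (m : ℤ)) ≠ (i', j' + m) := by simpa using hij
      rw [hec.coord_of_ne _ _ hij, hec.coord_of_ne _ _ hij', mul_zero, mul_zero]
  exact DFunLike.congr_fun hcomp x

end IsWeightedShift

variable {e : ι × ℤ → X} {c : ι × ℤ → X →L[𝕜] 𝕜} {w : κ → ι → ℤ → ℝ} {T : κ → X →L[𝕜] X}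
  {r : κ → ℕ}

theorem DSupercyclicWeights.denselyDSupercyclic [CompleteSpace X] [Finite κ] [Countable ι]
    {n : ℕ → ℕ} (h : DSupercyclicWeights w r n) (he1 : ∀ p, ‖e p‖ = 1)
    (he : Dense (Submodule.span 𝕜 (Set.range e) : Set X))
    (hw : ∀ l i j, 0 < w l i j) (hT : ∀ l, IsWeightedShift e (w l) (T l)) :
    DenselyDSupercyclic fun l => T l ^ r l := by
  have hnorm : ∀ l i j m, ‖(weightProd (w l) i j m : 𝕜)‖ = weightProd (w l) i j m :=
    fun l i j m => RCLike.norm_of_nonneg (weightProd_pos (hw l) i j m).le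
  have hpow : ∀ (s l : κ) (i : ι) (j : ℤ) (m m' : ℕ), (T l ^ m')
      ((weightProd (w s) i (j - m) m : 𝕜)⁻¹ • e (i, j - m)) =
      ((weightProd (w s) i (j - m) m : 𝕜)⁻¹ * (weightProd (w l) i (j - m) m' : 𝕜)) •
        e (i, j - m + m') := fun s l i j m m' => by
    rw [map_smul, (hT l).pow_apply, smul_smul]
  refine denselyDSupercyclic_of_tendsto he n
    (fun s k p => (weightProd (w s) p.1 (p.2 - (r s * n k : ℕ)) (r s * n k) : 𝕜)⁻¹ •
      e (p.1, p.2 - (r s * n k : ℕ))) ?_ ?_ ?_ <;> simp only [← pow_mul]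
  · rintro l s ⟨i₂, j₂⟩ ⟨i₁, j₁⟩
    simpa only [(hT l).pow_apply, norm_smul, norm_inv, hnorm, he1, mul_one, mul_comm] using
      h.mixed i₁ i₂ j₁ j₂ s l
  · rintro l ⟨i, j⟩
    have hne : ∀ m, (weightProd (w l) i (j - (m : ℕ)) m : 𝕜) ≠ 0 := fun m =>
      RCLike.ofReal_ne_zero.2 (weightProd_pos (hw l) _ _ _).ne'
    simp only [hpow, inv_mul_cancel₀ (hne _), sub_add_cancel, one_smul, tendsto_const_nhds]
  · rintro s l hsl ⟨i, j⟩
    rw [tendsto_zero_iff_norm_tendsto_zero]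
    simpa only [hpow, norm_smul, norm_mul, norm_inv, hnorm, he1, mul_one] using h.cross i j s l hsl

theorem DSupercyclicWeights.of_tendsto_sub_sum (hec : IsAuerbachSystem e c)
    (he : Dense (Submodule.span 𝕜 (Set.range e) : Set X)) (hT : ∀ l, IsWeightedShift e (w l) (T l))
    (hr1 : ∀ l, 1 ≤ r l) (hr : Function.Injective r) {n : ℕ → ℕ} {F : ℕ → Finset (ι × ℤ)}
    (hmem : ∀ p, ∀ᶠ k in atTop, p ∈ F k)
    (hF : ∀ k, ∀ d : ℤ, d ≠ 0 → ∀ i j, (i, j) ∈ F k → (i, j + d * n k) ∉ F k)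
    {x : ℕ → X} (hx : Tendsto (fun k => x k - ∑ p ∈ F k, e p) atTop (𝓝 0)) {z : ℕ → 𝕜}
    (hz : ∀ l, Tendsto (fun k => z k • ((T l ^ r l) ^ n k) (x k) - ∑ p ∈ F k, e p) atTop (𝓝 0)) :
    DSupercyclicWeights w r n := by
  have hshift : ∀ d : ℤ, d ≠ 0 → ∀ i j, ∀ᶠ k in atTop, (i, j + d * n k) ∉ F k := fun d hd i j =>
    (hmem (i, j)).mono fun k hk => hF k d hd i j hk
  have hr0 : ∀ l, (r l : ℤ) ≠ 0 := fun l => Nat.cast_ne_zero.2 (Nat.one_le_iff_ne_zero.1 (hr1 l))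
  have hcoord : ∀ l i j k, c (i, j + (r l * n k : ℕ)) (z k • ((T l ^ r l) ^ n k) (x k)) =
      z k * ((weightProd (w l) i j (r l * n k) : 𝕜) * c (i, j) (x k)) := fun l i j k => by
    rw [map_smul, smul_eq_mul, ← pow_mul, (hT l).coord_pow_apply hec he]
  have hx1 : ∀ i j, Tendsto (fun k => c (i, j) (x k)) atTop (𝓝 1) := fun i j =>
    hec.tendsto_coord_one hx (hmem (i, j))
  have hx0 : ∀ l i j, Tendsto (fun k => c (i, j - (r l * n k : ℕ)) (x k)) atTop (𝓝 0) :=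
    fun l i j => hec.tendsto_coord_zero hx <| by
      simpa [sub_eq_add_neg] using hshift (-r l) (neg_ne_zero.2 (hr0 l)) i j
  have hT0 : ∀ l i j, Tendsto (fun k => z k * ((weightProd (w l) i j (r l * n k) : 𝕜) *
      c (i, j) (x k))) atTop (𝓝 0) := fun l i j => by
    simp only [← hcoord]
    exact hec.tendsto_coord_zero (hz l) (by simpa using hshift (r l) (hr0 l) i j)
  have hT1 : ∀ l i j, Tendsto (fun k => z k * ((weightProd (w l) i (j - (r l * n k : ℕ))
      (r l * n k) : 𝕜) * c (i, j - (r l * n k : ℕ)) (x k))) atTop (𝓝 1) := fun l i j => by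
    simp only [← hcoord, sub_add_cancel]
    exact hec.tendsto_coord_one (hz l) (hmem (i, j))
  have hTcross : ∀ s l, s ≠ l → ∀ i j, Tendsto (fun k => z k * ((weightProd (w l) i
      (j - (r s * n k : ℕ)) (r l * n k) : 𝕜) * c (i, j - (r s * n k : ℕ)) (x k))) atTop (𝓝 0) :=
    fun s l hsl i j => by
      simp only [← hcoord]
      refine hec.tendsto_coord_zero (hz l) ?_
      have hd : (r l - r s : ℤ) ≠ 0 := sub_ne_zero.2 fun h => hsl (hr (Nat.cast_injective h)).symm
      refine (hshift _ hd i j).mono fun k hk => ?_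
      convert hk using 3
      push_cast
      ring
  refine ⟨fun i₁ i₂ j₁ j₂ l s => ?_, fun i j s l hsl => ?_⟩ <;>
    rw [← tendsto_ofReal_iff' (𝕜 := 𝕜)] <;> push_cast
  · exact tendsto_inv_mul_zero_of_tendsto_one (hT1 l i₁ j₁) (hx0 l i₁ j₁) (hT0 s i₂ j₂) (hx1 i₂ j₂)
  · exact tendsto_inv_mul_zero (hT1 s i j) (hTcross s l hsl i j)

theorem DenselyDSupercyclic.exists_dSupercyclicWeights [Finite κ] [Nonempty κ] [Countable ι]
    [Nonempty ι] (h : DenselyDSupercyclic fun l => T l ^ r l) (hec : IsAuerbachSystem e c)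
    (he : Dense (Submodule.span 𝕜 (Set.range e) : Set X)) (hT : ∀ l, IsWeightedShift e (w l) (T l))
    (hr1 : ∀ l, 1 ≤ r l) (hr : Function.Injective r) :
    ∃ n : ℕ → ℕ, StrictMono n ∧ (∀ k, 1 ≤ n k) ∧ DSupercyclicWeights w r n := by
  obtain ⟨F, hF⟩ := exists_seq_tendsto (atTop : Filter (Finset (ι × ℤ)))
  have hmem : ∀ p, ∀ᶠ k in atTop, p ∈ F k := fun p =>
    (hF.eventually_ge_atTop {p}).mono fun k hk => Finset.singleton_subset_iff.1 hk
  obtain ⟨n, x, z, hn, hP, hx, hz⟩ := h.exists_seq hec.one_lt_rank_pi (fun k => ∑ p ∈ F k, e p)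
    fun k => (eventually_ge_atTop 1).and (eventually_notMem_translate (F k))
  exact ⟨n, hn, fun k => (hP k).1,
    .of_tendsto_sub_sum hec he hT hr1 hr hmem (fun k => (hP k).2) hx hz⟩

end WeightedShift

section OperatorWeightedShift

variable {𝕜 K ι κ : Type*} [RCLike 𝕜] [NormedAddCommGroup K] [NormedSpace 𝕜 K]

/-- `T` is the bilateral forward operator weighted shift on `ℓ^q(ℤ, K)` with weights `A j`. -/
def IsOperatorWeightedShift {q : ENNReal} [Fact (1 ≤ q)] (A : ℤ → K →L[𝕜] K)
    (T : lp (fun _ : ℤ => K) q →L[𝕜] lp (fun _ : ℤ => K) q) : Prop :=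
  ∀ (x : lp (fun _ : ℤ => K) q) (j : ℤ), T x j = A (j - 1) (x (j - 1))

theorem IsOperatorWeightedShift.isWeightedShift {q : ENNReal} [Fact (1 ≤ q)] {A : ℤ → K →L[𝕜] K}
    {T : lp (fun _ : ℤ => K) q →L[𝕜] lp (fun _ : ℤ => K) q} (hT : IsOperatorWeightedShift A T)
    {f : ι → K} {a : ι → ℤ → ℝ} (hA : ∀ j i, A j (f i) = (a i j : 𝕜) • f i) :
    IsWeightedShift (fun p : ι × ℤ => (lp.single q p.2 (f p.1) : lp (fun _ : ℤ => K) q)) a T := by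
  intro i j
  ext m
  rw [hT, lp.coeFn_smul, Pi.smul_apply]
  by_cases hm : m = j + 1
  · subst hm
    rw [lp.single_apply_self, add_sub_cancel_right, lp.single_apply_self, hA]
  · rw [lp.single_apply_ne _ _ _ hm, lp.single_apply_ne _ _ _ (by omega), map_zero, smul_zero]

theorem stmt9_general [CompleteSpace K] [Countable ι] [Nonempty ι] [Finite κ] [Nonempty κ]
    {f : ι → K} {φ : ι → K →L[𝕜] 𝕜} (hf : IsAuerbachSystem f φ)
    (hfdense : Dense (Submodule.span 𝕜 (Set.range f) : Set K))
    {q : ENNReal} [Fact (1 ≤ q)] (hq : q ≠ ⊤)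
    {r : κ → ℕ} (hr1 : ∀ l, 1 ≤ r l) (hr : Function.Injective r)
    {a : κ → ι → ℤ → ℝ} (ha : ∀ l i j, 0 < a l i j)
    {A : κ → ℤ → K →L[𝕜] K} (hA : ∀ l j i, A l j (f i) = (a l i j : 𝕜) • f i)
    {T : κ → lp (fun _ : ℤ => K) q →L[𝕜] lp (fun _ : ℤ => K) q}
    (hT : ∀ l, IsOperatorWeightedShift (A l) (T l)) :
    DenselyDSupercyclic (fun l => T l ^ r l) ↔
      ∃ n : ℕ → ℕ, StrictMono n ∧ (∀ k, 1 ≤ n k) ∧ DSupercyclicWeights a r n := by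
  have hbasis := hf.lp_single (I := ℤ) (q := q)
  have hdense := dense_span_lp_single (I := ℤ) hq hfdense
  have hshift := fun l => (hT l).isWeightedShift (hA l)
  exact ⟨fun h => h.exists_dSupercyclicWeights hbasis hdense hshift hr1 hr,
    fun ⟨_, _, _, hn⟩ => hn.denselyDSupercyclic hbasis.norm_eq_one hdense ha hshift⟩

end OperatorWeightedShift

theorem stmt9
    {K : Type*} [NormedAddCommGroup K] [InnerProductSpace ℂ K] [CompleteSpace K]
    (f : ℕ → K) (hf : Orthonormal ℂ f)
    (hfdense : Dense (Submodule.span ℂ (Set.range f) : Set K))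
    {N : ℕ} (hN : 2 ≤ N)
    (r : Fin N → ℕ) (hr1 : ∀ l, 1 ≤ r l) (hr : StrictMono r)
    (a : Fin N → ℕ → ℤ → ℝ) (ha : ∀ (l : Fin N) (k : ℕ) (m : ℤ), 0 < a l k m)
    (A : Fin N → ℤ → K →L[ℂ] K)
    (hA : ∀ (l : Fin N) (m : ℤ) (k : ℕ), A l m (f k) = (a l k m : ℂ) • f k)
    (hbd : ∀ l : Fin N, ∃ C : ℝ, ∀ m : ℤ, ‖A l m‖ ≤ C)
    (T : Fin N → lp (fun _ : ℤ => K) 2 →L[ℂ] lp (fun _ : ℤ => K) 2)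
    (hT : ∀ (l : Fin N) (x : lp (fun _ : ℤ => K) 2) (j : ℤ),
      (T l x : ∀ _ : ℤ, K) j = A l (j - 1) ((x : ∀ _ : ℤ, K) (j - 1))) :
    Dense {x : lp (fun _ : ℤ => K) 2 | Dense (Set.range fun p : ℂ × ℕ =>
        fun l : Fin N => p.1 • (((T l) ^ (r l * p.2)) x))}
      ↔
    ∃ n : ℕ → ℕ, StrictMono n ∧ (∀ k, 1 ≤ n k) ∧
      (∀ i₁ i₂ : ℕ, ∀ j₁ j₂ : ℤ, ∀ l s : Fin N,
        Tendsto (fun k =>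
            ‖(∏ v ∈ Finset.Ico (j₁ - (r l * n k : ℕ)) j₁, (a l i₁ v)⁻¹) • f i₁‖ *
            ‖(∏ v ∈ Finset.Ico j₂ (j₂ + (r s * n k : ℕ)), a s i₂ v) • f i₂‖)
          atTop (𝓝 0)) ∧
      (∀ i : ℕ, ∀ j : ℤ, ∀ s l : Fin N, s < l →
        Tendsto (fun k =>
            ‖((∏ v ∈ Finset.Ico (j - (r s * n k : ℕ)) j, (a s i v)⁻¹) *
              ∏ v ∈ Finset.Ico (j - (r s * n k : ℕ)) (j + ((r l - r s) * n k : ℕ)), a l i v) •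
              f i‖) atTop (𝓝 0) ∧
        Tendsto (fun k =>
            ‖((∏ v ∈ Finset.Ico (j - (r l * n k : ℕ)) j, (a l i v)⁻¹) *
              ∏ v ∈ Finset.Ico (j - (r l * n k : ℕ)) (j - ((r l - r s) * n k : ℕ)), a s i v) •
              f i‖) atTop (𝓝 0)) := by
  have : Nonempty (Fin N) := ⟨⟨0, two_pos.trans_le hN⟩⟩
  simpa only [DenselyDSupercyclic, ← pow_mul, dSupercyclicWeights_iff_norm_prod_smul hf.1 hr ha]
    using stmt9_general (.of_orthonormal hf) hfdense ENNReal.ofNat_ne_top hr1 hr.injective ha hA hT
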